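/- arXiv:0810.3619 — 3 statements merged into one kernel-verified Lean document; each statement's English description precedes it below -/
import Mathlib

section
/- Under assumptions (A1)-(A4), the OS-EM iterates x_k satisfy lim_{k -> \infty} d( x_{k+1}, x_k ) = 0 with respect to the Kullback-Leibler distance. -/
/-!
Write `A`, `y` for the operator and data used at step `k` and `g` for the factor with
`x_{k+1} = x_k g`. The columns of the kernel are probability densities, so Jensen's inequality
applies pointwise to `g(t) = ∫ a(s,t) (y / A x_k)(s) ds`. Convexity of `z log z` gives
`d(x_{k+1}, x_k) = ∫ x_k g log g ≤ d(y, A x_k)`, and concavity of `log`, with `y = A x*`, gives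
`d(y, A x_k) ≤ ∫ x* log g = d(x*, x_k) - d(x*, x_{k+1})` (`BddStochastic.em_step`). The numbers
`d(x*, x_k)` are nonnegative and start from a finite value, so the sum of all `d(x_{k+1}, x_k)`
telescopes to at most `d(x*, x_0)` and its terms tend to zero.

The solution `x*` automatically has mass one, because `A` preserves mass. Hence `y = A x*`
and `A x_k` both take values in `[m, M]` almost everywhere, so `y / A x_k` and `g` are bounded and bounded away from
zero; this makes all logarithms and all uses of Fubini's theorem legitimate.
-/

open MeasureTheory Real Filter

/-- The Kullback-Leibler distance `d(v,u) = ∫ [ v ln(v/u) - v + u ]`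
(with the conventions `0 ln 0 = 0`). -/
noncomputable def KL {α : Type*} [MeasurableSpace α] (μ : Measure α) (v u : α → ℝ) : ℝ :=
  ∫ t, (v t * Real.log (v t / u t) - v t + u t) ∂μ

/-- The Fredholm integral operator `(A x)(s) = ∫_Ω a(s,t) x(t) dt`. -/
noncomputable def opA {d : ℕ} (Ω : Set (Fin d → ℝ)) (a : (Fin d → ℝ) → (Fin d → ℝ) → ℝ)
    (x : (Fin d → ℝ) → ℝ) : (Fin d → ℝ) → ℝ :=
  fun s => ∫ t in Ω, a s t * x t

/-- The adjoint operator `(A* w)(t) = ∫_Σ a(s,t) w(s) ds`. -/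
noncomputable def opAstar {d : ℕ} (S : Set (Fin d → ℝ)) (a : (Fin d → ℝ) → (Fin d → ℝ) → ℝ)
    (w : (Fin d → ℝ) → ℝ) : (Fin d → ℝ) → ℝ :=
  fun t => ∫ s in S, a s t * w s

/-- One EM step `P(x) = x · A*( y / (A x) )`. -/
noncomputable def emStep {d : ℕ} (Ω S : Set (Fin d → ℝ))
    (a : (Fin d → ℝ) → (Fin d → ℝ) → ℝ) (y x : (Fin d → ℝ) → ℝ) : (Fin d → ℝ) → ℝ :=
  fun t => x t * opAstar S a (fun s => y s / opA Ω a x s) t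

/-- Membership in `Δ = { x ∈ L¹(Ω) : x ≥ 0, ∫_Ω x = 1 }`. -/
def InDelta {d : ℕ} (Ω : Set (Fin d → ℝ)) (x : (Fin d → ℝ) → ℝ) : Prop :=
  Integrable x (volume.restrict Ω) ∧ (0 ≤ᵐ[volume.restrict Ω] x) ∧ (∫ t in Ω, x t) = 1


/-! ### Pointwise inequalities -/

/-- The integrand of the Kullback-Leibler distance is nonnegative, with the junk value
`v / 0 = 0` made harmless by `u = 0 → v = 0`. -/
lemma kl_integrand_nonneg {u v : ℝ} (hu : 0 ≤ u) (hv : 0 ≤ v) (huv : u = 0 → v = 0) :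
    0 ≤ v * Real.log (v / u) - v + u := by
  rcases hv.eq_or_lt with h | h
  · simp [← h, hu]
  · have hu' : 0 < u := hu.lt_of_ne fun h0 => h.ne' (huv h0.symm)
    have h1 := Real.one_sub_inv_le_log_of_pos (div_pos h hu')
    have h2 : v * (1 - (v / u)⁻¹) = v - u := by field_simp
    nlinarith [mul_le_mul_of_nonneg_left h1 hv]

/-- Jensen's inequality for the probability density `φ` and the functions `log` and `z log z`.
Both follow by integrating against `φ` the tangent-line bounds at the mean `G = ∫ φ w`, namely
`log w ≤ log G + w / G - 1` and `w log w ≥ w log G + w - G`. -/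
lemma jensen_density {β : Type*} [MeasurableSpace β] {ν : Measure β} {φ w : β → ℝ} {c C : ℝ}
    (hc : 0 < c) (hφi : Integrable φ ν) (hφ0 : ∀ᵐ s ∂ν, 0 ≤ φ s) (hφ1 : ∫ s, φ s ∂ν = 1)
    (hwm : AEStronglyMeasurable w ν) (hw : ∀ᵐ s ∂ν, c ≤ w s ∧ w s ≤ C) :
    (c ≤ ∫ s, φ s * w s ∂ν ∧ ∫ s, φ s * w s ∂ν ≤ C) ∧
    ∫ s, φ s * Real.log (w s) ∂ν ≤ Real.log (∫ s, φ s * w s ∂ν) ∧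
    (∫ s, φ s * w s ∂ν) * Real.log (∫ s, φ s * w s ∂ν) ≤
      ∫ s, φ s * (w s * Real.log (w s)) ∂ν := by
  have hlm : AEStronglyMeasurable (fun s => Real.log (w s)) ν :=
    (Real.measurable_log.comp_aemeasurable hwm.aemeasurable).aestronglyMeasurable
  have hlb : ∀ᵐ s ∂ν, ‖Real.log (w s)‖ ≤ max |Real.log c| |Real.log C| := by
    filter_upwards [hw] with s hs
    exact abs_le_max_abs_abs (Real.log_le_log hc hs.1)
      (Real.log_le_log (hc.trans_le hs.1) hs.2)
  have hI1 : Integrable (fun s => φ s * w s) ν := by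
    refine hφi.mul_bdd (c := C) hwm ?_
    filter_upwards [hw] with s hs
    rw [Real.norm_eq_abs, abs_of_pos (hc.trans_le hs.1)]
    exact hs.2
  have hI2 : Integrable (fun s => φ s * Real.log (w s)) ν := hφi.mul_bdd hlm hlb
  have hI3 : Integrable (fun s => φ s * (w s * Real.log (w s))) ν := by
    simpa only [mul_assoc] using hI1.mul_bdd hlm hlb
  have hlow : c ≤ ∫ s, φ s * w s ∂ν := by
    calc c = ∫ s, φ s * c ∂ν := by rw [integral_mul_const, hφ1, one_mul]
      _ ≤ _ := integral_mono_ae (hφi.mul_const c) hI1 (by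
        filter_upwards [hw, hφ0] with s hs h0
        exact mul_le_mul_of_nonneg_left hs.1 h0)
  have hup : ∫ s, φ s * w s ∂ν ≤ C := by
    calc _ ≤ ∫ s, φ s * C ∂ν := integral_mono_ae hI1 (hφi.mul_const C) (by
          filter_upwards [hw, hφ0] with s hs h0
          exact mul_le_mul_of_nonneg_left hs.2 h0)
      _ = C := by rw [integral_mul_const, hφ1, one_mul]
  set G := ∫ s, φ s * w s ∂ν with hG
  have hGpos : 0 < G := hc.trans_le hlow
  refine ⟨⟨hlow, hup⟩, ?_, ?_⟩
  · calc _ ≤ ∫ s, (φ s * (Real.log G - 1) + φ s * w s * G⁻¹) ∂ν := by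
          refine integral_mono_ae hI2 ((hφi.mul_const _).add (hI1.mul_const _)) ?_
          filter_upwards [hw, hφ0] with s hs h0
          have hws := hc.trans_le hs.1
          have h1 := Real.log_le_sub_one_of_pos (div_pos hws hGpos)
          rw [Real.log_div hws.ne' hGpos.ne', div_eq_mul_inv] at h1
          nlinarith [mul_le_mul_of_nonneg_left h1 h0]
      _ = Real.log G := by
          rw [integral_add (hφi.mul_const _) (hI1.mul_const _), integral_mul_const,
            integral_mul_const, hφ1, ← hG, mul_inv_cancel₀ hGpos.ne']
          ring
  · calc _ = ∫ s, (φ s * w s * (Real.log G + 1) - φ s * G) ∂ν := by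
          rw [integral_sub (hI1.mul_const _) (hφi.mul_const _), integral_mul_const,
            integral_mul_const, hφ1, ← hG]
          ring
      _ ≤ _ := by
          refine integral_mono_ae ((hI1.mul_const _).sub (hφi.mul_const _)) hI3 ?_
          filter_upwards [hw, hφ0] with s hs h0
          have hws := hc.trans_le hs.1
          have h1 := kl_integrand_nonneg hGpos.le hws.le (fun h => absurd h hGpos.ne')
          rw [Real.log_div hws.ne' hGpos.ne'] at h1
          nlinarith [mul_le_mul_of_nonneg_left h1 h0]

/-! ### Bounded stochastic kernels -/

/-- A jointly measurable kernel `a s t` whose columns `a · t` are probability densities with respect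
to `ν`, with values in `[m, M]` for almost all arguments. -/
structure BddStochastic {α β : Type*} [MeasurableSpace α] [MeasurableSpace β]
    (μ : Measure α) (ν : Measure β) (a : β → α → ℝ) (m M : ℝ) : Prop where
  meas : Measurable (Function.uncurry a)
  pos : 0 < m
  le : m ≤ M
  bdd : ∀ᵐ s ∂ν, ∀ᵐ t ∂μ, m ≤ a s t ∧ a s t ≤ M
  col : ∀ᵐ t ∂μ, ∫ s, a s t ∂ν = 1

namespace BddStochastic

variable {α β : Type*} [MeasurableSpace α] [MeasurableSpace β] {μ : Measure α} {ν : Measure β}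
  {a : β → α → ℝ} {m M : ℝ}

lemma measurableSet (h : BddStochastic μ ν a m M) :
    MeasurableSet {p : β × α | m ≤ a p.1 p.2 ∧ a p.1 p.2 ≤ M} :=
  (measurableSet_le measurable_const h.meas).inter (measurableSet_le h.meas measurable_const)

lemma norm_le (h : BddStochastic μ ν a m M) {r : ℝ} (hr : m ≤ r ∧ r ≤ M) : ‖r‖ ≤ M := by
  rw [Real.norm_eq_abs, abs_of_pos (h.pos.trans_le hr.1)]
  exact hr.2

variable [IsFiniteMeasure μ] [IsFiniteMeasure ν]

lemma bdd_swap (h : BddStochastic μ ν a m M) :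
    ∀ᵐ t ∂μ, ∀ᵐ s ∂ν, m ≤ a s t ∧ a s t ≤ M :=
  (Measure.ae_ae_comm h.measurableSet).1 h.bdd

lemma integrable_prod (h : BddStochastic μ ν a m M) {f : β → ℝ} {x : α → ℝ}
    (hf : Integrable f ν) (hx : Integrable x μ) :
    Integrable (fun p : β × α => a p.1 p.2 * (f p.1 * x p.2)) (ν.prod μ) := by
  refine (hf.mul_prod hx).bdd_mul (c := M) h.meas.aestronglyMeasurable ?_
  filter_upwards [(Measure.ae_prod_iff_ae_ae h.measurableSet).2 h.bdd] with p hp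
  exact h.norm_le hp

/-- The operator with kernel `a` and its transpose are adjoint. -/
lemma adjoint (h : BddStochastic μ ν a m M) {f : β → ℝ} {x : α → ℝ}
    (hf : Integrable f ν) (hx : Integrable x μ) :
    Integrable (fun t => x t * ∫ s, a s t * f s ∂ν) μ ∧
    Integrable (fun s => f s * ∫ t, a s t * x t ∂μ) ν ∧
    ∫ t, x t * ∫ s, a s t * f s ∂ν ∂μ = ∫ s, f s * ∫ t, a s t * x t ∂μ ∂ν := by
  have hI := h.integrable_prod hf hx
  have e1 : (fun t => ∫ s, a s t * (f s * x t) ∂ν) = fun t => x t * ∫ s, a s t * f s ∂ν := by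
    funext t
    rw [← integral_const_mul]
    congr 1; funext s; ring
  have e2 : (fun s => ∫ t, a s t * (f s * x t) ∂μ) = fun s => f s * ∫ t, a s t * x t ∂μ := by
    funext s
    rw [← integral_const_mul]
    congr 1; funext t; ring
  have h1 := hI.integral_prod_right
  have h2 := hI.integral_prod_left
  have h3 := integral_integral_swap (f := fun s t => a s t * (f s * x t)) hI
  simp only [e1, e2] at h1 h2 h3
  exact ⟨h1, h2, h3.symm⟩

lemma integral_apply (h : BddStochastic μ ν a m M) {x : α → ℝ} (hx : Integrable x μ) :
    ∫ s, ∫ t, a s t * x t ∂μ ∂ν = ∫ t, x t ∂μ := by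
  have h1 := (h.adjoint (integrable_const (1 : ℝ)) hx).2.2
  simp only [mul_one, one_mul] at h1
  rw [← h1]
  refine integral_congr_ae ?_
  filter_upwards [h.col] with t ht
  rw [ht, mul_one]

/-- The operator maps probability densities to functions with values in `[m, M]`. -/
lemma apply_mem (h : BddStochastic μ ν a m M) {x : α → ℝ} (hx : Integrable x μ)
    (hx0 : 0 ≤ᵐ[μ] x) (hx1 : ∫ t, x t ∂μ = 1) :
    ∀ᵐ s ∂ν, m ≤ ∫ t, a s t * x t ∂μ ∧ ∫ t, a s t * x t ∂μ ≤ M := by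
  filter_upwards [h.bdd] with s hs
  have hI : Integrable (fun t => a s t * x t) μ := by
    refine hx.bdd_mul (c := M) (h.meas.of_uncurry_left).aestronglyMeasurable ?_
    filter_upwards [hs] with t ht
    exact h.norm_le ht
  constructor
  · calc m = ∫ t, m * x t ∂μ := by rw [integral_const_mul, hx1, mul_one]
      _ ≤ _ := integral_mono_ae (hx.const_mul m) hI (by
        filter_upwards [hs, hx0] with t ht h0
        exact mul_le_mul_of_nonneg_right ht.1 h0)
  · calc _ ≤ ∫ t, M * x t ∂μ := integral_mono_ae hI (hx.const_mul M) (by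
          filter_upwards [hs, hx0] with t ht h0
          exact mul_le_mul_of_nonneg_right ht.2 h0)
      _ = M := by rw [integral_const_mul, hx1, mul_one]

/-- One multiplicative EM step, with `z` a density solving the equation and `g` the correction
factor. The last inequality passes through `d(y, A x) = ∫ y log (y / A x)`: this number is
at least `∫ x g log g = d(x g, x)` by convexity of `z log z`, and at most `∫ z log g` by
concavity of `log` together with `y = A z`. -/
lemma em_step (h : BddStochastic μ ν a m M) {x z : α → ℝ} {y : β → ℝ}
    (hx : Integrable x μ) (hx0 : 0 ≤ᵐ[μ] x) (hx1 : ∫ t, x t ∂μ = 1)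
    (hz : Integrable z μ) (hz0 : 0 ≤ᵐ[μ] z) (hz1 : ∫ t, z t ∂μ = 1)
    (hy : Integrable y ν) (hyz : (fun s => ∫ t, a s t * z t ∂μ) =ᵐ[ν] y)
    (g : α → ℝ) (hg : g = fun t => ∫ s, a s t * (y s / ∫ t, a s t * x t ∂μ) ∂ν) :
    (∀ᵐ t ∂μ, 0 < g t) ∧
    (Integrable (fun t => x t * g t) μ ∧ ∫ t, x t * g t ∂μ = 1) ∧
    Integrable (fun t => z t * Real.log (g t)) μ ∧
    0 ≤ KL μ (fun t => x t * g t) x ∧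
    KL μ (fun t => x t * g t) x ≤ ∫ t, z t * Real.log (g t) ∂μ := by
  have hMpos : 0 < M := h.pos.trans_le h.le
  set u : β → ℝ := fun s => ∫ t, a s t * x t ∂μ with hu
  set w : β → ℝ := fun s => y s / u s with hw
  have hum := h.apply_mem hx hx0 hx1
  have hui : Integrable u ν := by
    simpa only [one_mul] using (h.adjoint (integrable_const (1 : ℝ)) hx).2.1
  have hwm : AEStronglyMeasurable w ν :=
    (hy.aemeasurable.div hui.aemeasurable).aestronglyMeasurable
  have hc : 0 < m / M := div_pos h.pos hMpos
  have hwb : ∀ᵐ s ∂ν, m / M ≤ w s ∧ w s ≤ M / m := by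
    filter_upwards [hum, h.apply_mem hz hz0 hz1, hyz] with s h1 h2 h3
    rw [h3] at h2
    have := h.pos
    exact ⟨div_le_div₀ (h.pos.le.trans h2.1) h2.1 (h.pos.trans_le h1.1) h1.2,
      div_le_div₀ hMpos.le h2.2 h.pos h1.1⟩
  have hlm : AEStronglyMeasurable (fun s => Real.log (w s)) ν :=
    (Real.measurable_log.comp_aemeasurable hwm.aemeasurable).aestronglyMeasurable
  have hlb : ∀ᵐ s ∂ν, ‖Real.log (w s)‖ ≤ max |Real.log (m / M)| |Real.log (M / m)| := by
    filter_upwards [hwb] with s hs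
    exact abs_le_max_abs_abs (Real.log_le_log hc hs.1)
      (Real.log_le_log (hc.trans_le hs.1) hs.2)
  have hwi : Integrable w ν := by
    refine Integrable.of_bound hwm (M / m) ?_
    filter_upwards [hwb] with s hs
    rw [Real.norm_eq_abs, abs_of_pos (hc.trans_le hs.1)]
    exact hs.2
  have hli : Integrable (fun s => Real.log (w s)) ν := Integrable.of_bound hlm _ hlb
  have hwli : Integrable (fun s => w s * Real.log (w s)) ν := hwi.mul_bdd hlm hlb
  have hJ : ∀ᵐ t ∂μ, (m / M ≤ g t ∧ g t ≤ M / m) ∧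
      ∫ s, a s t * Real.log (w s) ∂ν ≤ Real.log (g t) ∧
      g t * Real.log (g t) ≤ ∫ s, a s t * (w s * Real.log (w s)) ∂ν := by
    filter_upwards [h.bdd_swap, h.col] with t hb hcol
    rw [hg]
    refine jensen_density hc ?_ ?_ hcol hwm hwb
    · refine Integrable.of_bound (h.meas.of_uncurry_right).aestronglyMeasurable M ?_
      filter_upwards [hb] with s hs
      exact h.norm_le hs
    · filter_upwards [hb] with s hs
      exact h.pos.le.trans hs.1
  have hgpos : ∀ᵐ t ∂μ, 0 < g t := by
    filter_upwards [hJ] with t ht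
    exact hc.trans_le ht.1.1
  have hgm : AEStronglyMeasurable g μ := by
    have h1 := (h.adjoint hwi (integrable_const (1 : ℝ))).1
    simp only [one_mul] at h1
    rw [hg]
    exact h1.aestronglyMeasurable
  have hlgm : AEStronglyMeasurable (fun t => Real.log (g t)) μ :=
    (Real.measurable_log.comp_aemeasurable hgm.aemeasurable).aestronglyMeasurable
  have hlgb : ∀ᵐ t ∂μ, ‖Real.log (g t)‖ ≤ max |Real.log (m / M)| |Real.log (M / m)| := by
    filter_upwards [hJ] with t ht
    exact abs_le_max_abs_abs (Real.log_le_log hc ht.1.1)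
      (Real.log_le_log (hc.trans_le ht.1.1) ht.1.2)
  have hxg : Integrable (fun t => x t * g t) μ ∧ ∫ t, x t * g t ∂μ = 1 := by
    obtain ⟨h1, -, h3⟩ := h.adjoint hwi hx
    rw [hg]
    refine ⟨h1, h3.trans ?_⟩
    rw [← hz1, ← h.integral_apply hz]
    refine integral_congr_ae ?_
    filter_upwards [hum, hyz] with s h1 h2
    rw [h2]
    exact div_mul_cancel₀ _ (h.pos.trans_le h1.1).ne'
  have hxgl : Integrable (fun t => x t * g t * Real.log (g t)) μ := hxg.1.mul_bdd hlgm hlgb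
  have hzl : Integrable (fun t => z t * Real.log (g t)) μ := hz.mul_bdd hlgm hlgb
  refine ⟨hgpos, hxg, hzl, ?_, ?_⟩
  · refine integral_nonneg_of_ae ?_
    filter_upwards [hx0, hgpos] with t h1 h2
    exact kl_integrand_nonneg h1 (mul_nonneg h1 h2.le) (fun h0 => by simp [h0])
  · obtain ⟨i1, -, e1⟩ := h.adjoint hwli hx
    obtain ⟨i2, -, e2⟩ := h.adjoint hli hz
    calc KL μ (fun t => x t * g t) x
        = ∫ t, (x t * g t * Real.log (g t) - x t * g t + x t) ∂μ := by
          refine integral_congr_ae ?_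
          filter_upwards with t
          rcases eq_or_ne (x t) 0 with h0 | h0
          · simp [h0]
          · simp only [mul_div_cancel_left₀ _ h0]
      _ = ∫ t, x t * g t * Real.log (g t) ∂μ := by
          have e3 : ∫ t, (x t * g t * Real.log (g t) - x t * g t + x t) ∂μ =
              ∫ t, (x t * g t * Real.log (g t) - x t * g t) ∂μ + ∫ t, x t ∂μ :=
            integral_add (hxgl.sub hxg.1) hx
          rw [e3, integral_sub hxgl hxg.1, hxg.2, hx1]
          ring
      _ ≤ ∫ t, x t * ∫ s, a s t * (w s * Real.log (w s)) ∂ν ∂μ := by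
          refine integral_mono_ae hxgl i1 ?_
          filter_upwards [hJ, hx0] with t h1 h2
          simpa only [mul_assoc] using mul_le_mul_of_nonneg_left h1.2.2 h2
      _ = ∫ s, (w s * Real.log (w s)) * u s ∂ν := e1
      _ = ∫ s, Real.log (w s) * ∫ t, a s t * z t ∂μ ∂ν := by
          refine integral_congr_ae ?_
          filter_upwards [hum, hyz] with s h1 h2
          have h3 : w s * u s = y s := div_mul_cancel₀ _ (h.pos.trans_le h1.1).ne'
          rw [h2, ← h3]
          ring
      _ = ∫ t, z t * ∫ s, a s t * Real.log (w s) ∂ν ∂μ := e2.symm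
      _ ≤ ∫ t, z t * Real.log (g t) ∂μ := by
          refine integral_mono_ae i2 hzl ?_
          filter_upwards [hJ, hz0] with t h1 h2
          exact mul_le_mul_of_nonneg_left h1.2.1 h2

end BddStochastic

/-! ### Convergence -/

/-- Nonnegative decrements of a sequence that is bounded below tend to zero. -/
lemma tendsto_zero_of_le_decrement {b E : ℕ → ℝ} (hb : ∀ k, 0 ≤ b k) (hE : ∀ k, 0 ≤ E k)
    (h : ∀ k, E (k + 1) ≤ E k - b k) : Tendsto b atTop (nhds 0) := by
  refine (summable_of_sum_range_le (c := E 0) hb fun n => ?_).tendsto_atTop_zero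
  have : ∑ i ∈ Finset.range n, b i ≤ E 0 - E n := by
    induction n with
    | zero => simp
    | succ n ih =>
      rw [Finset.sum_range_succ]
      linarith [h n]
  linarith [hE n]

/-- under (A1)-(A4), `lim_{k → ∞} d(x_{k+1}, x_k) = 0`. -/
theorem osem_consecutive_kl_tendsto_zero
    {d : ℕ} (Ω S : Set (Fin d → ℝ))
    (hΩo : IsOpen Ω) (hΩb : Bornology.IsBounded Ω)
    (hSo : IsOpen S) (hSb : Bornology.IsBounded S)
    (N : ℕ) (hN : 0 < N)
    (a : ℕ → (Fin d → ℝ) → (Fin d → ℝ) → ℝ)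
    (y : ℕ → (Fin d → ℝ) → ℝ)
    (ha_meas : ∀ j < N, Measurable (Function.uncurry (a j)))
    (m M : ℝ) (hm : 0 < m)
    -- (A2)
    (hA2 : ∀ j < N, ∀ᵐ s ∂(volume.restrict S), ∀ᵐ t ∂(volume.restrict Ω),
      m ≤ a j s t ∧ a j s t ≤ M)
    -- (A1)
    (hA1 : ∀ j < N, ∀ᵐ t ∂(volume.restrict Ω), (∫ s in S, a j s t) = 1)
    (M' : ℝ) (hM' : 0 < M')
    (hy_int : ∀ j < N, Integrable (y j) (volume.restrict S))
    -- (A3)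
    (hA3 : ∀ j < N, (0 ≤ᵐ[volume.restrict S] y j) ∧ (∫ s in S, y j s) = 1 ∧
      (∀ᵐ s ∂(volume.restrict S), y j s ≤ M'))
    -- the OS-EM iteration
    (x : ℕ → (Fin d → ℝ) → ℝ)
    (hx0 : InDelta Ω (x 0))
    (hiter : ∀ k, x (k + 1) = emStep Ω S (a (k % N)) (y (k % N)) (x k))
    -- (A4): a nonnegative solution x* of the system, not a.e. zero, with d(x*, x_0) < ∞
    (xstar : (Fin d → ℝ) → ℝ)
    (hxstar_int : Integrable xstar (volume.restrict Ω))
    (hxstar_nonneg : 0 ≤ᵐ[volume.restrict Ω] xstar)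
    (hxstar_ne : ¬ (xstar =ᵐ[volume.restrict Ω] (0 : (Fin d → ℝ) → ℝ)))
    (hxstar_sol : ∀ j < N, opA Ω (a j) xstar =ᵐ[volume.restrict S] y j)
    (hfin : Integrable (fun t => xstar t * Real.log (xstar t / x 0 t) - xstar t + x 0 t)
      (volume.restrict Ω))
    (hfin' : ∀ᵐ t ∂(volume.restrict Ω), x 0 t = 0 → xstar t = 0)
 :
    Tendsto (fun k => KL (volume.restrict Ω) (x (k + 1)) (x k)) atTop (nhds 0) := by
  have : IsFiniteMeasure (volume.restrict Ω) := ⟨by simpa using hΩb.measure_lt_top⟩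
  have : IsFiniteMeasure (volume.restrict S) := ⟨by simpa using hSb.measure_lt_top⟩
  have hmod : ∀ k, k % N < N := fun k => Nat.mod_lt k hN
  -- `max m M` in place of `M` makes `m ≤ M` available without inspecting null sets.
  have hK : ∀ j < N, BddStochastic (volume.restrict Ω) (volume.restrict S) (a j) m (max m M) :=
    fun j hj => ⟨ha_meas j hj, hm, le_max_left _ _, by
      filter_upwards [hA2 j hj] with s hs
      filter_upwards [hs] with t ht
      exact ⟨ht.1, ht.2.trans (le_max_right _ _)⟩, hA1 j hj⟩
  have hz1 : ∫ t in Ω, xstar t = 1 := by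
    rw [← (hK 0 hN).integral_apply hxstar_int, ← (hA3 0 hN).2.1]
    exact integral_congr_ae (hxstar_sol 0 hN)
  have hstep := fun k (hk : InDelta Ω (x k)) =>
    (hK (k % N) (hmod k)).em_step hk.1 hk.2.1 hk.2.2 hxstar_int hxstar_nonneg hz1
      (hy_int _ (hmod k)) (hxstar_sol _ (hmod k)) _ rfl
  have hnext : ∀ k, x (k + 1) = fun t => x k t * ∫ s in S, a (k % N) s t *
      (y (k % N) s / ∫ t in Ω, a (k % N) s t * x k t) := hiter
  have hΔ : ∀ k, InDelta Ω (x k) := by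
    intro k
    induction k with
    | zero => exact hx0
    | succ k ih =>
      obtain ⟨h1, h2, -⟩ := hstep k ih
      rw [hnext k]
      refine ⟨h2.1, ?_, h2.2⟩
      filter_upwards [h1, ih.2.1] with t h3 h4
      exact mul_nonneg h4 h3.le
  -- Pointwise form of `d(x*, x_{k+1}) = d(x*, x_k) - ∫ x* log g` before integration.
  have hrel : ∀ k, (∀ᵐ t ∂(volume.restrict Ω), x k t = 0 → xstar t = 0) →
      (fun t => xstar t * Real.log (xstar t / x (k + 1) t) - xstar t + x (k + 1) t)
        =ᵐ[volume.restrict Ω]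
      fun t => (xstar t * Real.log (xstar t / x k t) - xstar t + x k t) -
        xstar t * Real.log (∫ s in S, a (k % N) s t *
          (y (k % N) s / ∫ t in Ω, a (k % N) s t * x k t)) + (x (k + 1) t - x k t) := by
    intro k hk
    filter_upwards [hk, (hstep k (hΔ k)).1] with t h1 h2
    rcases eq_or_ne (xstar t) 0 with h0 | h0
    · simp [h0]
    · have hx : x k t ≠ 0 := fun h => h0 (h1 h)
      have e : x (k + 1) t = x k t * ∫ s in S, a (k % N) s t *
          (y (k % N) s / ∫ t in Ω, a (k % N) s t * x k t) := congrFun (hnext k) t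
      have e' : Real.log (xstar t / x (k + 1) t) = Real.log (xstar t / x k t) -
          Real.log (∫ s in S, a (k % N) s t *
            (y (k % N) s / ∫ t in Ω, a (k % N) s t * x k t)) := by
        rw [e, ← div_div, Real.log_div (div_ne_zero h0 hx) h2.ne']
      rw [e']
      ring
  have hz : ∀ k, (∀ᵐ t ∂(volume.restrict Ω), x k t = 0 → xstar t = 0) ∧
      Integrable (fun t => xstar t * Real.log (xstar t / x k t) - xstar t + x k t)
        (volume.restrict Ω) := by
    intro k
    induction k with
    | zero => exact ⟨hfin', hfin⟩
    | succ k ih =>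
      obtain ⟨h1, h2, h3, -⟩ := hstep k (hΔ k)
      refine ⟨?_, ((ih.2.sub h3).add ((hΔ (k + 1)).1.sub (hΔ k).1)).congr (hrel k ih.1).symm⟩
      filter_upwards [ih.1, h1] with t h4 h5 h6
      rw [congrFun (hnext k) t] at h6
      exact h4 ((mul_eq_zero.1 h6).resolve_right h5.ne')
  refine tendsto_zero_of_le_decrement (E := fun k => KL (volume.restrict Ω) xstar (x k)) ?_ ?_ ?_
  · intro k
    rw [hnext k]
    exact (hstep k (hΔ k)).2.2.2.1
  · intro k
    refine integral_nonneg_of_ae ?_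
    filter_upwards [(hΔ k).2.1, hxstar_nonneg, (hz k).1] with t h1 h2 h3
    exact kl_integrand_nonneg h1 h2 h3
  · intro k
    obtain ⟨-, -, h3, -, h5⟩ := hstep k (hΔ k)
    rw [← hnext k] at h5
    have e : KL (volume.restrict Ω) xstar (x (k + 1)) = _ := integral_congr_ae (hrel k (hz k).1)
    have i1 := (hz k).2
    have i2 := (hΔ (k + 1)).1.sub (hΔ k).1
    have e1 := integral_add (i1.sub h3) i2
    have e2 := integral_sub i1 h3
    have e3 := integral_sub (hΔ (k + 1)).1 (hΔ k).1
    rw [(hΔ (k + 1)).2.2, (hΔ k).2.2] at e3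
    simp only [Pi.sub_apply] at e1
    rw [e2, e3] at e1
    have e4 := e.trans e1
    simp only [KL] at e4 h5 ⊢
    linarith
end

section
/- Under assumptions (A1)-(A4), for each j in {0,...,N-1} and each p in [1,\infty), the OS-EM iterates satisfy lim_{m -> \infty} \| A_j x_{j + mN} - y_j \|_{L^p(\Sigma)} = 0; that is, along the subsequence formed by the j-th step of each iteration cycle, the residual of the j-th equation converges to zero in every L^p norm. -/
/-!
Each OS-EM step multiplies the iterate `x_k` by `P_k = A*(y / A x_k)`, so that, up to a null set,
`x_n = x_0 exp (∑_{k<n} log P_k)`. The argument is a Fejér-type monotonicity in Kullback-Leibler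
distance: `d(x⋆, x_k) - d(x⋆, x_{k+1}) = ∫ x⋆ log P_k`, and since `a(·, t)` is a probability
density, Jensen's inequality and duality bound this decrease below by
`∫ A x⋆ log (y / A x_k) = d(y, A x_k)` (`BddKernel.step`). Integrability is never an issue, because
the solution `x⋆` and all iterates are probability densities, so `y = A x⋆` and `A x_k` are both
at least `m` and bounded above.

To avoid finiteness questions about `d(x⋆, x_k)`, the telescoped inequality
`∑_{k<n} d(y, A x_k) ≤ d(x⋆, x_0)` is obtained directly from the pointwise Fenchel-Young inequality
`mul_le_kl_add_exp`. Hence the data residuals are summable in Kullback-Leibler distance and tend to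
zero. Finally the Kullback-Leibler integrand dominates the squared Hellinger distance
(`sq_sqrt_sub_le_kl`), which for uniformly bounded functions gives convergence in every `L^p`
(`tendsto_eLpNorm_of_kl`).
-/


open MeasureTheory Real Filter

/-! ### Scalar inequalities -/

section Scalar

/-- The Kullback-Leibler integrand dominates the squared Hellinger distance. -/
lemma sq_sqrt_sub_le_kl {v u : ℝ} (hv : 0 < v) (hu : 0 < u) :
    (√v - √u) ^ 2 ≤ v * Real.log (v / u) - v + u := by
  have hsv := Real.sqrt_pos.2 hv
  have hsu := Real.sqrt_pos.2 hu
  have e1 : √v * √v = v := Real.mul_self_sqrt hv.le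
  have e2 : √u * √u = u := Real.mul_self_sqrt hu.le
  have h1 : Real.log (√u / √v) ≤ √u / √v - 1 := Real.log_le_sub_one_of_pos (by positivity)
  have h2 : Real.log (v / u) = -2 * Real.log (√u / √v) := by
    rw [Real.log_div hv.ne' hu.ne', Real.log_div hsu.ne' hsv.ne', Real.log_sqrt hv.le,
      Real.log_sqrt hu.le]
    ring
  have h3 : v * Real.log (√u / √v) ≤ v * (√u / √v - 1) := mul_le_mul_of_nonneg_left h1 hv.le
  have h4 : v * (√u / √v - 1) = √v * √u - v := by
    have : v * (√u / √v) = √v * √u := by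
      field_simp
      nlinarith
    linarith
  rw [h2]
  nlinarith

lemma kl_nonneg {v u : ℝ} (hv : 0 < v) (hu : 0 < u) : 0 ≤ v * Real.log (v / u) - v + u :=
  (sq_nonneg _).trans (sq_sqrt_sub_le_kl hv hu)

lemma sq_sub_le_kl {v u B : ℝ} (hv : 0 < v) (hu : 0 < u) (hvB : v ≤ B) (huB : u ≤ B) :
    (u - v) ^ 2 ≤ 4 * B * (v * Real.log (v / u) - v + u) := by
  have h := sq_sqrt_sub_le_kl hv hu
  have e1 : √v * √v = v := Real.mul_self_sqrt hv.le
  have e2 : √u * √u = u := Real.mul_self_sqrt hu.le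
  have h1 : (u - v) ^ 2 = (√v + √u) ^ 2 * (√v - √u) ^ 2 := by
    rw [← mul_pow, ← sq_sub_sq, sq, sq √v, sq √u, e1, e2]
    ring
  have h2 : (√v + √u) ^ 2 ≤ 4 * B := by nlinarith [sq_nonneg (√v - √u)]
  rw [h1]
  exact mul_le_mul h2 h (sq_nonneg _) (by linarith)

/-- Fenchel-Young inequality between `r log r - r` and `exp`, in homogeneous form. -/
lemma mul_le_kl_add_exp {v u σ : ℝ} (hv : 0 ≤ v) (hu : 0 ≤ u) (h : u = 0 → v = 0) :
    v * σ ≤ v * Real.log (v / u) - v + u * Real.exp σ := by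
  rcases hv.eq_or_lt with rfl | hv
  · have := mul_nonneg hu (Real.exp_pos σ).le
    simpa using this
  · have hu : 0 < u := lt_of_le_of_ne hu fun h0 => hv.ne' (h h0.symm)
    have h1 := Real.add_one_le_exp (σ - Real.log (v / u))
    rw [Real.exp_sub, Real.exp_log (by positivity)] at h1
    have h2 := mul_le_mul_of_nonneg_left h1 hv.le
    have h3 : v * (Real.exp σ / (v / u)) = u * Real.exp σ := by field_simp
    linarith

end Scalar

/-! ### Averages against a probability density -/

section Average

variable {α : Type*} [MeasurableSpace α] {μ : Measure α} {b c : α → ℝ} {lo hi : ℝ}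

/-- The average of a function against a probability density stays between its bounds. -/
lemma avg_bounds (hb : Integrable b μ) (hb0 : ∀ᵐ t ∂μ, 0 ≤ b t) (h1 : ∫ t, b t ∂μ = 1)
    (hc : AEStronglyMeasurable c μ) (hlh : ∀ᵐ t ∂μ, lo ≤ c t ∧ c t ≤ hi) :
    Integrable (fun t => c t * b t) μ ∧ lo ≤ ∫ t, c t * b t ∂μ ∧ ∫ t, c t * b t ∂μ ≤ hi := by
  have hi1 : Integrable (fun t => c t * b t) μ := by
    refine hb.bdd_mul (c := max (-lo) hi) hc ?_
    filter_upwards [hlh] with t ht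
    rw [Real.norm_eq_abs, abs_le']
    exact ⟨ht.2.trans (le_max_right _ _), (neg_le_neg ht.1).trans (le_max_left _ _)⟩
  refine ⟨hi1, ?_, ?_⟩
  · calc lo = ∫ t, lo * b t ∂μ := by rw [integral_const_mul, h1, mul_one]
      _ ≤ _ := by
        refine integral_mono_ae (hb.const_mul _) hi1 ?_
        filter_upwards [hlh, hb0] with t ht h0 using mul_le_mul_of_nonneg_right ht.1 h0
  · calc _ ≤ ∫ t, hi * b t ∂μ := by
          refine integral_mono_ae hi1 (hb.const_mul _) ?_
          filter_upwards [hlh, hb0] with t ht h0 using mul_le_mul_of_nonneg_right ht.2 h0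
      _ = hi := by rw [integral_const_mul, h1, mul_one]

/-- Jensen's inequality for the logarithm, from its tangent line at the average. -/
lemma avg_log_le (hb : Integrable b μ) (hb0 : ∀ᵐ t ∂μ, 0 ≤ b t) (h1 : ∫ t, b t ∂μ = 1)
    (hc : AEStronglyMeasurable c μ) (hlo : 0 < lo) (hlh : ∀ᵐ t ∂μ, lo ≤ c t ∧ c t ≤ hi) :
    ∫ t, Real.log (c t) * b t ∂μ ≤ Real.log (∫ t, c t * b t ∂μ) := by
  obtain ⟨hi1, hl, -⟩ := avg_bounds hb hb0 h1 hc hlh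
  have hlog := avg_bounds (c := fun t => Real.log (c t)) (lo := Real.log lo) (hi := Real.log hi)
    hb hb0 h1 (Real.measurable_log.comp_aemeasurable hc.aemeasurable).aestronglyMeasurable (by
      filter_upwards [hlh] with t ht
      exact ⟨Real.log_le_log hlo ht.1, Real.log_le_log (hlo.trans_le ht.1) ht.2⟩)
  set A := ∫ t, c t * b t ∂μ with hA
  have hApos : 0 < A := hlo.trans_le hl
  calc _ ≤ ∫ t, ((Real.log A - 1) * b t + A⁻¹ * (c t * b t)) ∂μ := by
        refine integral_mono_ae hlog.1 ((hb.const_mul _).add (hi1.const_mul _)) ?_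
        filter_upwards [hlh, hb0] with t ht h0
        have hct : 0 < c t := hlo.trans_le ht.1
        have h2 := Real.log_le_sub_one_of_pos (x := c t / A) (by positivity)
        rw [Real.log_div hct.ne' hApos.ne', div_eq_inv_mul] at h2
        have h3 : Real.log (c t) ≤ (Real.log A - 1) + A⁻¹ * c t := by linarith
        have := mul_le_mul_of_nonneg_right h3 h0
        linarith
    _ = Real.log A := by
        rw [integral_add (hb.const_mul _) (hi1.const_mul _), integral_const_mul,
          integral_const_mul, h1, ← hA, inv_mul_cancel₀ hApos.ne']
        ring

end Average

/-! ### Integral operators with bounded kernels and the EM step -/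

section Kernel

variable {α β : Type*} [MeasurableSpace α] [MeasurableSpace β] {ν : Measure β} {μ : Measure α}
  {a : β → α → ℝ} {m M : ℝ}

/-- A measurable kernel with values in `[m, M]`, where `0 < m`, such that `a(·, t)` is a
probability density with respect to `ν` for almost every `t`. -/
structure BddKernel (ν : Measure β) (μ : Measure α) (a : β → α → ℝ) (m M : ℝ) : Prop where
  meas : Measurable (Function.uncurry a)
  pos : 0 < m
  posM : 0 < M
  bdd : ∀ᵐ s ∂ν, ∀ᵐ t ∂μ, m ≤ a s t ∧ a s t ≤ M
  mass : ∀ᵐ t ∂μ, ∫ s, a s t ∂ν = 1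

namespace BddKernel

lemma measurableSet_bdd (K : BddKernel ν μ a m M) :
    MeasurableSet {z : β × α | m ≤ a z.1 z.2 ∧ a z.1 z.2 ≤ M} :=
  (measurableSet_le measurable_const K.meas).inter (measurableSet_le K.meas measurable_const)

lemma abs_le (K : BddKernel ν μ a m M) {r : ℝ} (h : m ≤ r ∧ r ≤ M) : ‖r‖ ≤ M := by
  rw [Real.norm_eq_abs, abs_of_pos (K.pos.trans_le h.1)]
  exact h.2

lemma apply_bounds (K : BddKernel ν μ a m M) {x : α → ℝ} (hx : Integrable x μ)
    (hx0 : ∀ᵐ t ∂μ, 0 ≤ x t) (h1 : ∫ t, x t ∂μ = 1) :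
    ∀ᵐ s ∂ν, m ≤ ∫ t, a s t * x t ∂μ ∧ ∫ t, a s t * x t ∂μ ≤ M := by
  filter_upwards [K.bdd] with s hs
  exact (avg_bounds hx hx0 h1 (K.meas.comp measurable_prodMk_left).aestronglyMeasurable hs).2

variable [IsFiniteMeasure ν] [IsFiniteMeasure μ]

lemma bdd_swap (K : BddKernel ν μ a m M) : ∀ᵐ t ∂μ, ∀ᵐ s ∂ν, m ≤ a s t ∧ a s t ≤ M :=
  (Measure.ae_ae_comm (p := fun s t => m ≤ a s t ∧ a s t ≤ M) K.measurableSet_bdd).1 K.bdd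

lemma integrable_prod (K : BddKernel ν μ a m M) {x : α → ℝ} (hx : Integrable x μ) :
    Integrable (fun z : β × α => a z.1 z.2 * x z.2) (ν.prod μ) := by
  refine (hx.comp_snd ν).bdd_mul (c := M) K.meas.aestronglyMeasurable ?_
  filter_upwards [(Measure.ae_prod_iff_ae_ae K.measurableSet_bdd).2 K.bdd] with z hz
  exact K.abs_le hz

/-- Duality `⟨g, A x⟩ = ⟨A* g, x⟩` for bounded `g`, by Fubini. -/
lemma dual (K : BddKernel ν μ a m M) {x : α → ℝ} (hx : Integrable x μ) {g : β → ℝ}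
    (hg : AEStronglyMeasurable g ν) {C : ℝ} (hC : ∀ᵐ s ∂ν, ‖g s‖ ≤ C) :
    Integrable (fun t => x t * ∫ s, a s t * g s ∂ν) μ ∧
    ∫ s, g s * (∫ t, a s t * x t ∂μ) ∂ν = ∫ t, x t * (∫ s, a s t * g s ∂ν) ∂μ := by
  have hI : Integrable (fun z : β × α => g z.1 * (a z.1 z.2 * x z.2)) (ν.prod μ) := by
    refine (K.integrable_prod hx).bdd_mul (c := C) hg.comp_fst ?_
    exact Measure.quasiMeasurePreserving_fst.ae hC
  have e : ∀ t, ∫ s, g s * (a s t * x t) ∂ν = x t * ∫ s, a s t * g s ∂ν := fun t => by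
    rw [← integral_const_mul]
    congr 1
    ext s
    ring
  constructor
  · have := hI.integral_prod_right
    simpa only [e] using this
  · have := integral_integral_swap (f := fun s t => g s * (a s t * x t)) hI
    simpa only [integral_const_mul, e] using this

/-- The normalization of the kernel makes the operator preserve total mass. -/
lemma integral_apply (K : BddKernel ν μ a m M) {x : α → ℝ} (hx : Integrable x μ) :
    ∫ s, (∫ t, a s t * x t ∂μ) ∂ν = ∫ t, x t ∂μ := by
  have h := (K.dual hx (g := fun _ => 1) aestronglyMeasurable_const (C := 1) (by simp)).2
  simp only [one_mul, mul_one] at h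
  rw [h]
  refine integral_congr_ae ?_
  filter_upwards [K.mass] with t ht
  rw [ht, mul_one]

/-- The adjoint averages `w` against the probability densities `a(·, t)`: it preserves bounds, and
Jensen's inequality holds for the logarithm. -/
lemma adjoint_bounds (K : BddKernel ν μ a m M) {w : β → ℝ} (hw : AEStronglyMeasurable w ν)
    {lo hi : ℝ} (hlo : 0 < lo) (hlh : ∀ᵐ s ∂ν, lo ≤ w s ∧ w s ≤ hi) :
    ∀ᵐ t ∂μ, (lo ≤ ∫ s, a s t * w s ∂ν ∧ ∫ s, a s t * w s ∂ν ≤ hi) ∧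
      ∫ s, a s t * Real.log (w s) ∂ν ≤ Real.log (∫ s, a s t * w s ∂ν) := by
  filter_upwards [K.bdd_swap, K.mass] with t ht h1
  have hmeas : AEStronglyMeasurable (fun s => a s t) ν :=
    (K.meas.comp measurable_prodMk_right).aestronglyMeasurable
  have hb : Integrable (fun s => a s t) ν :=
    Integrable.of_bound hmeas M (by filter_upwards [ht] with s hs using K.abs_le hs)
  have hb0 : ∀ᵐ s ∂ν, 0 ≤ a s t := by
    filter_upwards [ht] with s hs using K.pos.le.trans hs.1
  have h2 := (avg_bounds hb hb0 h1 hw hlh).2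
  have h3 := avg_log_le hb hb0 h1 hw hlo hlh
  simp only [mul_comm (a _ t)]
  exact ⟨h2, h3⟩

/-- One EM step, with multiplier `P`: the new iterate is again a probability density, `P` is
bounded above and away from zero, and the Kullback-Leibler residual of the data is controlled by
the decrease `∫ x⋆ log P` of the Kullback-Leibler distance to the solution `x⋆`. -/
lemma step (K : BddKernel ν μ a m M) {y : β → ℝ} {x xs P : α → ℝ} {M' : ℝ}
    (hM' : 0 < M')
    (hy : Integrable y ν) (hyb : ∀ᵐ s ∂ν, m ≤ y s ∧ y s ≤ M') (hy1 : ∫ s, y s ∂ν = 1)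
    (hx : Integrable x μ) (hx0 : ∀ᵐ t ∂μ, 0 ≤ x t) (h1 : ∫ t, x t ∂μ = 1)
    (hxs : Integrable xs μ) (hxs0 : ∀ᵐ t ∂μ, 0 ≤ xs t)
    (hsol : ∀ᵐ s ∂ν, ∫ t, a s t * xs t ∂μ = y s)
    (hP : ∀ t, P t = ∫ s, a s t * (y s / ∫ t, a s t * x t ∂μ) ∂ν) :
    (Integrable (fun t => x t * P t) μ ∧ (∀ᵐ t ∂μ, 0 ≤ x t * P t) ∧ ∫ t, x t * P t ∂μ = 1) ∧
    (∀ᵐ t ∂μ, 0 < P t) ∧ Integrable (fun t => xs t * Real.log (P t)) μ ∧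
    Integrable (fun s => y s * Real.log (y s / ∫ t, a s t * x t ∂μ) - y s
      + ∫ t, a s t * x t ∂μ) ν ∧
    ∫ s, (y s * Real.log (y s / ∫ t, a s t * x t ∂μ) - y s + ∫ t, a s t * x t ∂μ) ∂ν
      ≤ ∫ t, xs t * Real.log (P t) ∂μ := by
  have hm := K.pos
  have hM := K.posM
  set u : β → ℝ := fun s => ∫ t, a s t * x t ∂μ with hu
  replace hP : ∀ t, P t = ∫ s, a s t * (y s / u s) ∂ν := hP
  have hui : Integrable u ν := (K.integrable_prod hx).integral_prod_left
  have hu1 : ∫ s, u s ∂ν = 1 := (K.integral_apply hx).trans h1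
  have hub : ∀ᵐ s ∂ν, m ≤ u s ∧ u s ≤ M := K.apply_bounds hx hx0 h1
  have hwm : AEStronglyMeasurable (fun s => y s / u s) ν :=
    (hy.aemeasurable.div hui.aemeasurable).aestronglyMeasurable
  have hlo : 0 < m / M := div_pos hm hM
  have hwb : ∀ᵐ s ∂ν, m / M ≤ y s / u s ∧ y s / u s ≤ M' / m := by
    filter_upwards [hyb, hub] with s hs hs'
    exact ⟨div_le_div₀ (hm.le.trans hs.1) hs.1 (hm.trans_le hs'.1) hs'.2,
      div_le_div₀ hM'.le hs.2 hm hs'.1⟩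
  have hwC : ∀ᵐ s ∂ν, ‖y s / u s‖ ≤ M' / m := by
    filter_upwards [hwb] with s hs
    rw [Real.norm_eq_abs, abs_of_pos (hlo.trans_le hs.1)]
    exact hs.2
  have hPb := K.adjoint_bounds hwm hlo hwb
  simp only [← hP] at hPb
  have hlogm : AEStronglyMeasurable (fun s => Real.log (y s / u s)) ν :=
    (Real.measurable_log.comp_aemeasurable hwm.aemeasurable).aestronglyMeasurable
  have hlogb : ∀ {r : ℝ}, m / M ≤ r ∧ r ≤ M' / m →
      ‖Real.log r‖ ≤ max (-Real.log (m / M)) (Real.log (M' / m)) := fun {r} hr => by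
    rw [Real.norm_eq_abs, abs_le']
    exact ⟨(Real.log_le_log (hlo.trans_le hr.1) hr.2).trans (le_max_right _ _),
      (neg_le_neg (Real.log_le_log hlo hr.1)).trans (le_max_left _ _)⟩
  have hlogC : ∀ᵐ s ∂ν, ‖Real.log (y s / u s)‖ ≤ max (-Real.log (m / M)) (Real.log (M' / m)) := by
    filter_upwards [hwb] with s hs using hlogb hs
  have hd1 := K.dual hx hwm hwC
  have hd2 := K.dual hxs hlogm hlogC
  simp only [← hP] at hd1
  have hPm : AEStronglyMeasurable P μ := by
    have : AEStronglyMeasurable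
        (fun z : β × α => a z.1 z.2 * (y z.1 / u z.1)) (ν.prod μ) :=
      K.meas.aestronglyMeasurable.mul hwm.comp_fst
    have h2 := this.prod_swap.integral_prod_right'
    refine h2.congr (Eventually.of_forall fun t => ?_)
    simp only [Prod.swap_prod_mk]
    exact (hP t).symm
  have hLi : Integrable (fun t => xs t * Real.log (P t)) μ := by
    have := hxs.bdd_mul (f := fun t => Real.log (P t))
      (c := max (-Real.log (m / M)) (Real.log (M' / m)))
      (Real.measurable_log.comp_aemeasurable hPm.aemeasurable).aestronglyMeasurable
      (by filter_upwards [hPb] with t ht using hlogb ht.1)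
    simpa only [mul_comm] using this
  have hyl : Integrable (fun s => y s * Real.log (y s / u s)) ν := by
    simpa only [mul_comm] using hy.bdd_mul hlogm hlogC
  refine ⟨⟨hd1.1, ?_, ?_⟩, ?_, hLi, (hyl.sub hy).add hui, ?_⟩
  · filter_upwards [hx0, hPb] with t ht ht'
    exact mul_nonneg ht (hlo.le.trans ht'.1.1)
  · rw [← hd1.2, ← hy1]
    refine integral_congr_ae ?_
    filter_upwards [hub] with s hs
    exact div_mul_cancel₀ _ (hm.trans_le hs.1).ne'
  · filter_upwards [hPb] with t ht using hlo.trans_le ht.1.1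
  · calc ∫ s, (y s * Real.log (y s / u s) - y s + u s) ∂ν
        = ∫ s, y s * Real.log (y s / u s) ∂ν := by
          rw [integral_add (f := fun s => y s * Real.log (y s / u s) - y s) (hyl.sub hy) hui,
            integral_sub hyl hy, hy1, hu1]
          ring
      _ = ∫ s, Real.log (y s / u s) * (∫ t, a s t * xs t ∂μ) ∂ν := by
          refine integral_congr_ae ?_
          filter_upwards [hsol] with s hs
          rw [hs, mul_comm]
      _ = _ := hd2.2
      _ ≤ _ := by
          refine integral_mono_ae hd2.1 hLi ?_
          filter_upwards [hPb, hxs0] with t ht h0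
          exact mul_le_mul_of_nonneg_left ht.2 h0

end BddKernel

/-! ### From Kullback-Leibler convergence to `L^p` convergence -/

/-- Convergence in Kullback-Leibler distance of uniformly bounded functions forces convergence in
every `L^p`, `1 ≤ p < ∞`. -/
lemma tendsto_eLpNorm_of_kl [IsFiniteMeasure ν] {y : β → ℝ} {u : ℕ → β → ℝ} {B : ℝ}
    (hy : AEStronglyMeasurable y ν) (hu : ∀ n, AEStronglyMeasurable (u n) ν)
    (hyB : ∀ᵐ s ∂ν, 0 < y s ∧ y s ≤ B) (huB : ∀ n, ∀ᵐ s ∂ν, 0 < u n s ∧ u n s ≤ B)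
    (hi : ∀ n, Integrable (fun s => y s * Real.log (y s / u n s) - y s + u n s) ν)
    (hlim : Tendsto (fun n => ∫ s, (y s * Real.log (y s / u n s) - y s + u n s) ∂ν) atTop (nhds 0))
    {p : ℝ} (hp : 1 ≤ p) :
    Tendsto (fun n => eLpNorm (fun s => u n s - y s) (ENNReal.ofReal p) ν) atTop (nhds 0) := by
  -- On a finite measure space it suffices to treat an exponent `q ≥ 2`.
  set q := max p 2 with hq
  have hq2 : 2 ≤ q := le_max_right _ _
  have hq0 : 0 < q := by linarith
  have hbound : ∀ n, eLpNorm (fun s => u n s - y s) (ENNReal.ofReal q) ν ≤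
      (ENNReal.ofReal (∫ s, B ^ (q - 2) * (4 * B *
        (y s * Real.log (y s / u n s) - y s + u n s)) ∂ν)) ^ (1 / q) := by
    intro n
    rw [eLpNorm_eq_lintegral_rpow_enorm_toReal (by simpa using hq0) ENNReal.ofReal_ne_top,
      ENNReal.toReal_ofReal hq0.le,
      ofReal_integral_eq_lintegral_ofReal (((hi n).const_mul _).const_mul _)]
    · refine ENNReal.rpow_le_rpow (lintegral_mono_ae ?_) (by positivity)
      filter_upwards [hyB, huB n] with s h1 h2
      rw [Real.enorm_eq_ofReal_abs, ENNReal.ofReal_rpow_of_nonneg (abs_nonneg _) hq0.le]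
      refine ENNReal.ofReal_le_ofReal ?_
      have h3 : |u n s - y s| ≤ B := by rw [abs_le]; constructor <;> linarith
      calc |u n s - y s| ^ q = |u n s - y s| ^ (q - 2) * |u n s - y s| ^ (2 : ℝ) := by
            rw [← Real.rpow_add_of_nonneg (abs_nonneg _) (by linarith) (by norm_num)]
            congr 1
            ring
        _ = |u n s - y s| ^ (q - 2) * (u n s - y s) ^ 2 := by
            rw [Real.rpow_two, sq_abs]
        _ ≤ _ := mul_le_mul (Real.rpow_le_rpow (abs_nonneg _) h3 (by linarith))
            (sq_sub_le_kl h1.1 h2.1 h1.2 h2.2) (sq_nonneg _)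
            (Real.rpow_nonneg ((abs_nonneg _).trans h3) _)
    · filter_upwards [hyB, huB n] with s h1 h2
      have hB : 0 ≤ B := h1.1.le.trans h1.2
      have := kl_nonneg h1.1 h2.1
      exact mul_nonneg (Real.rpow_nonneg hB _) (mul_nonneg (by linarith) this)
  have hlim2 : Tendsto (fun n => (ENNReal.ofReal (∫ s, B ^ (q - 2) * (4 * B *
      (y s * Real.log (y s / u n s) - y s + u n s)) ∂ν)) ^ (1 / q)) atTop (nhds 0) := by
    simp only [integral_const_mul]
    have h := ENNReal.tendsto_ofReal ((hlim.const_mul (4 * B)).const_mul (B ^ (q - 2)))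
    have h2 := ((ENNReal.continuous_rpow_const (y := 1 / q)).tendsto _).comp h
    have e : ENNReal.ofReal (B ^ (q - 2) * (4 * B * 0)) ^ (1 / q) = 0 := by
      rw [mul_zero, mul_zero, ENNReal.ofReal_zero, ENNReal.zero_rpow_of_pos (by positivity)]
    rw [e] at h2
    exact h2
  have hlimq := tendsto_of_tendsto_of_tendsto_of_le_of_le tendsto_const_nhds hlim2
    (fun _ => zero_le) hbound
  have hexp : 0 ≤ 1 / (ENNReal.ofReal p).toReal - 1 / (ENNReal.ofReal q).toReal := by
    rw [ENNReal.toReal_ofReal (by linarith), ENNReal.toReal_ofReal hq0.le, sub_nonneg]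
    exact one_div_le_one_div_of_le (by linarith) (le_max_left _ _)
  have hne := ENNReal.rpow_ne_top_of_nonneg hexp (measure_ne_top ν Set.univ)
  have hlim3 := ENNReal.Tendsto.mul_const hlimq (Or.inr hne)
  rw [zero_mul] at hlim3
  exact tendsto_of_tendsto_of_tendsto_of_le_of_le tendsto_const_nhds hlim3
    (fun _ => zero_le) fun n => eLpNorm_le_eLpNorm_mul_rpow_measure_univ
      (ENNReal.ofReal_le_ofReal (le_max_left _ _)) ((hu n).sub hy)

end Kernel

/-! ### Summability of the residuals -/

/-- under (A1)-(A4), for each `j < N` and `p ∈ [1,∞)`,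
`‖A_j x_{j+mN} - y_j‖_{L^p(Σ)} → 0` as `m → ∞`. -/
theorem osem_residual_subsequence_lp_tendsto_zero
    {d : ℕ} (Ω S : Set (Fin d → ℝ))
    (hΩo : IsOpen Ω) (hΩb : Bornology.IsBounded Ω)
    (hSo : IsOpen S) (hSb : Bornology.IsBounded S)
    (N : ℕ) (hN : 0 < N)
    (a : ℕ → (Fin d → ℝ) → (Fin d → ℝ) → ℝ)
    (y : ℕ → (Fin d → ℝ) → ℝ)
    (ha_meas : ∀ j < N, Measurable (Function.uncurry (a j)))
    (m M : ℝ) (hm : 0 < m)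
    -- (A2)
    (hA2 : ∀ j < N, ∀ᵐ s ∂(volume.restrict S), ∀ᵐ t ∂(volume.restrict Ω),
      m ≤ a j s t ∧ a j s t ≤ M)
    -- (A1)
    (hA1 : ∀ j < N, ∀ᵐ t ∂(volume.restrict Ω), (∫ s in S, a j s t) = 1)
    (M' : ℝ) (hM' : 0 < M')
    (hy_int : ∀ j < N, Integrable (y j) (volume.restrict S))
    -- (A3)
    (hA3 : ∀ j < N, (0 ≤ᵐ[volume.restrict S] y j) ∧ (∫ s in S, y j s) = 1 ∧
      (∀ᵐ s ∂(volume.restrict S), y j s ≤ M'))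
    -- the OS-EM iteration
    (x : ℕ → (Fin d → ℝ) → ℝ)
    (hx0 : InDelta Ω (x 0))
    (hiter : ∀ k, x (k + 1) = emStep Ω S (a (k % N)) (y (k % N)) (x k))
    -- (A4): a nonnegative solution x* of the system, not a.e. zero, with d(x*, x_0) < ∞
    (xstar : (Fin d → ℝ) → ℝ)
    (hxstar_int : Integrable xstar (volume.restrict Ω))
    (hxstar_nonneg : 0 ≤ᵐ[volume.restrict Ω] xstar)
    (hxstar_ne : ¬ (xstar =ᵐ[volume.restrict Ω] (0 : (Fin d → ℝ) → ℝ)))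
    (hxstar_sol : ∀ j < N, opA Ω (a j) xstar =ᵐ[volume.restrict S] y j)
    (hfin : Integrable (fun t => xstar t * Real.log (xstar t / x 0 t) - xstar t + x 0 t)
      (volume.restrict Ω))
    (hfin' : ∀ᵐ t ∂(volume.restrict Ω), x 0 t = 0 → xstar t = 0)
 :
    ∀ j < N, ∀ p : ℝ, 1 ≤ p →
      Tendsto (fun mm : ℕ =>
          eLpNorm (fun s => opA Ω (a j) (x (j + mm * N)) s - y j s) (ENNReal.ofReal p)
            (volume.restrict S))
        atTop (nhds 0) := by
  have : IsFiniteMeasure (volume.restrict Ω) :=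
    isFiniteMeasure_restrict.2 hΩb.measure_lt_top.ne
  have : IsFiniteMeasure (volume.restrict S) :=
    isFiniteMeasure_restrict.2 hSb.measure_lt_top.ne
  set μ := volume.restrict Ω
  set ν := volume.restrict S
  -- Enlarging the upper bound makes its positivity evident.
  have hK : ∀ j < N, BddKernel ν μ (a j) m (max M m) := fun j hj =>
    { meas := ha_meas j hj
      pos := hm
      posM := hm.trans_le (le_max_right _ _)
      bdd := by
        filter_upwards [hA2 j hj] with s hs
        filter_upwards [hs] with t ht using ⟨ht.1, ht.2.trans (le_max_left _ _)⟩
      mass := hA1 j hj }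
  have hsol : ∀ j < N, ∀ᵐ s ∂ν, ∫ t, a j s t * xstar t ∂μ = y j s := hxstar_sol
  have hxs1 : ∫ t, xstar t ∂μ = 1 := by
    rw [← (hK 0 hN).integral_apply hxstar_int, ← (hA3 0 hN).2.1]
    exact integral_congr_ae (hsol 0 hN)
  -- The data inherit the lower bound `m` because they are images of a probability density.
  have hyb : ∀ j < N, ∀ᵐ s ∂ν, m ≤ y j s ∧ y j s ≤ M' := fun j hj => by
    filter_upwards [(hK j hj).apply_bounds hxstar_int hxstar_nonneg hxs1, hsol j hj,
      (hA3 j hj).2.2] with s h1 h2 h3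
    rw [h2] at h1
    exact ⟨h1.1, h3⟩
  have hmod : ∀ k, k % N < N := fun k => Nat.mod_lt k hN
  set u : ℕ → (Fin d → ℝ) → ℝ := fun k s => ∫ t, a (k % N) s t * x k t ∂μ with hu
  set P : ℕ → (Fin d → ℝ) → ℝ := fun k t => ∫ s, a (k % N) s t * (y (k % N) s / u k s) ∂ν
    with hP
  have hxP : ∀ k, x (k + 1) = fun t => x k t * P k t := hiter
  have hstep : ∀ k, Integrable (x k) μ → (∀ᵐ t ∂μ, 0 ≤ x k t) → ∫ t, x k t ∂μ = 1 → _ :=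
    fun k h1 h2 h3 => (hK _ (hmod k)).step (P := P k) hM' (hy_int _ (hmod k)) (hyb _ (hmod k))
      (hA3 _ (hmod k)).2.1 h1 h2 h3 hxstar_int hxstar_nonneg (hsol _ (hmod k)) (fun _ => rfl)
  have hx : ∀ k, Integrable (x k) μ ∧ (∀ᵐ t ∂μ, 0 ≤ x k t) ∧ ∫ t, x k t ∂μ = 1 := by
    intro k
    induction k with
    | zero => exact hx0
    | succ k ih =>
      rw [hxP]
      exact (hstep k ih.1 ih.2.1 ih.2.2).1
  replace hstep := fun k => (hstep k (hx k).1 (hx k).2.1 (hx k).2.2).2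
  set D : ℕ → ℝ := fun k => ∫ s, (y (k % N) s * Real.log (y (k % N) s / u k s)
    - y (k % N) s + u k s) ∂ν with hD
  have hub : ∀ k, ∀ᵐ s ∂ν, m ≤ u k s ∧ u k s ≤ max M m := fun k =>
    (hK _ (hmod k)).apply_bounds (hx k).1 (hx k).2.1 (hx k).2.2
  have hD0 : ∀ k, 0 ≤ D k := fun k => by
    refine integral_nonneg_of_ae ?_
    filter_upwards [hyb _ (hmod k), hub k] with s h1 h2
    exact kl_nonneg (hm.trans_le h1.1) (hm.trans_le h2.1)
  -- Every iterate is the starting point times the exponential of the accumulated log-multipliers.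
  have hexp : ∀ k, ∀ᵐ t ∂μ,
      x k t = x 0 t * Real.exp (∑ i ∈ Finset.range k, Real.log (P i t)) := by
    intro k
    induction k with
    | zero => simp
    | succ k ih =>
      filter_upwards [ih, (hstep k).1] with t h1 h2
      rw [hxP, Finset.sum_range_succ, Real.exp_add, Real.exp_log h2, ← mul_assoc, ← h1]
  have hsum : ∀ n, ∑ k ∈ Finset.range n, D k ≤
      ∫ t, (xstar t * Real.log (xstar t / x 0 t) - xstar t + x 0 t) ∂μ := by
    intro n
    calc ∑ k ∈ Finset.range n, D k
        ≤ ∑ k ∈ Finset.range n, ∫ t, xstar t * Real.log (P k t) ∂μ :=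
          Finset.sum_le_sum fun k _ => (hstep k).2.2.2
      _ = ∫ t, ∑ k ∈ Finset.range n, xstar t * Real.log (P k t) ∂μ :=
          (integral_finsetSum _ fun k _ => (hstep k).2.1).symm
      _ ≤ ∫ t, ((xstar t * Real.log (xstar t / x 0 t) - xstar t + x 0 t)
            + (x n t - x 0 t)) ∂μ := by
          refine integral_mono_ae (integrable_finsetSum _ fun k _ => (hstep k).2.1)
            (hfin.add ((hx n).1.sub (hx 0).1)) ?_
          filter_upwards [hexp n, hxstar_nonneg, (hx 0).2.1, hfin'] with t h1 h2 h3 h4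
          have := mul_le_kl_add_exp (σ := ∑ i ∈ Finset.range n, Real.log (P i t)) h2 h3 h4
          rw [← h1, Finset.mul_sum] at this
          linarith
      _ = _ := by
          rw [integral_add (g := fun t => x n t - x 0 t) hfin ((hx n).1.sub (hx 0).1), integral_sub (hx n).1 (hx 0).1,
            (hx n).2.2, (hx 0).2.2, sub_self, add_zero]
  have hDlim : Tendsto D atTop (nhds 0) :=
    (summable_of_sum_range_le hD0 hsum).tendsto_atTop_zero
  intro j hj p hp
  have hjm : ∀ n, (j + n * N) % N = j := fun n => by
    rw [Nat.add_mul_mod_self_right, Nat.mod_eq_of_lt hj]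
  have hidx : Tendsto (fun n : ℕ => j + n * N) atTop atTop :=
    tendsto_atTop_mono (fun n => (Nat.le_mul_of_pos_right n hN).trans (Nat.le_add_left _ _))
      tendsto_id
  have hlim := hDlim.comp hidx
  have hopA : ∀ n, opA Ω (a j) (x (j + n * N)) = u (j + n * N) := fun n => by
    simp only [hu, hjm]
    rfl
  simp only [hopA]
  refine tendsto_eLpNorm_of_kl (u := fun n => u (j + n * N)) (B := max M' (max M m))
    (hy_int j hj).aestronglyMeasurable
    (fun n => ((hK _ (hmod _)).integrable_prod (hx _).1).integral_prod_left.aestronglyMeasurable)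
    ?_ (fun n => ?_) (fun n => ?_) ?_ hp
  · filter_upwards [hyb j hj] with s hs
    exact ⟨hm.trans_le hs.1, hs.2.trans (le_max_left _ _)⟩
  · filter_upwards [hub (j + n * N)] with s hs
    exact ⟨hm.trans_le hs.1, hs.2.trans (le_max_right _ _)⟩
  · have := (hstep (j + n * N)).2.2.1
    simpa only [hu, hjm] using this
  · simpa only [hD, Function.comp_def, hjm] using hlim
end

section
/- Under assumptions (A1)-(A6), let noisy data y_j^\delta satisfy \| y_j - y_j^\delta \|_{L^1} <= \delta_j with \delta_j > 0 for all j, let \tau > 1 and \gamma = max{ |ln(m_1/M)|, |ln(M_1/m)| }. Then the loping OS-EM iterates satisfy d( x^*, x_{k+1}^\delta ) <= d( x^*, x_k^\delta ) for every k in N. -/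
/-!
Write `q = y^δ / (A x)` and `w = A* q` for one active step, so that the new iterate is `x w`.
Pointwise, the integrands of `d(x*, x)` and `d(x*, x w)` differ by `x* log w + x - x w`, and
`∫ x w = ∫ q (A x) = ∫ y^δ = 1 = ∫ x` by Fubini, hence
`d(x*, x) - d(x*, x w) = ∫ x* log w`.

For almost every `t` the kernel `a(·, t)` is a probability density, so Jensen's inequality gives
`log w ≥ A* (log q)`. Fubini then yields `∫ x* log w ≥ ∫ (A x*) log q = ∫ y log q`
(`integral_kernel_mul`). Since `∫ A x = 1 = ∫ y^δ`, the quantity `∫ y^δ log q` is exactly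
`d(y^δ, A x)`, and `|log q| ≤ γ` because `m ≤ A x ≤ M` and `m₁ ≤ y^δ ≤ M₁`. Thus
`∫ y log q ≥ d(y^δ, A x) - γ ‖y - y^δ‖₁ ≥ d(y^δ, A x) - γ δ`, which is positive at an active
step because `τ > 1`.

For the argument to iterate, membership in `Δ`, the absolute continuity `x = 0 → x* = 0` and the
integrability of the integrand of `d(x*, x)` are carried along; all three survive a step because
`w` is bounded between two positive constants.
-/

open MeasureTheory Real Filter

/-! ### The kernel operator and its adjoint -/

section Kernel

variable {α β : Type*} [MeasurableSpace α] [MeasurableSpace β]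
  {μ : Measure α} {ν : Measure β} [IsFiniteMeasure μ] [IsFiniteMeasure ν]
  {a : β → α → ℝ} {m M : ℝ}

theorem integrable_kernel_mul (ha : Measurable (Function.uncurry a)) (hm : 0 < m)
    (hA2 : ∀ᵐ p ∂(ν.prod μ), m ≤ a p.1 p.2 ∧ a p.1 p.2 ≤ M)
    {f : α → ℝ} (hf : Integrable f μ) {g : β → ℝ} (hg : AEStronglyMeasurable g ν) {C : ℝ}
    (hgC : ∀ᵐ s ∂ν, |g s| ≤ C) :
    Integrable (fun p : β × α => a p.1 p.2 * f p.2 * g p.1) (ν.prod μ) := by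
  have h1 : Integrable (fun p : β × α => f p.2) (ν.prod μ) := hf.comp_snd ν
  have h2 : Integrable (fun p : β × α => a p.1 p.2 * f p.2) (ν.prod μ) := by
    refine h1.bdd_mul (c := M) ha.aestronglyMeasurable ?_
    filter_upwards [hA2] with p hp
    rw [Real.norm_eq_abs, abs_of_nonneg (hm.le.trans hp.1)]
    exact hp.2
  refine h2.mul_bdd (c := C) hg.comp_fst ?_
  exact Measure.quasiMeasurePreserving_fst.ae hgC

/-- Fubini's theorem in the form `⟨A f, g⟩ = ⟨f, A* g⟩`. -/
theorem integral_kernel_mul (ha : Measurable (Function.uncurry a)) (hm : 0 < m)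
    (hA2 : ∀ᵐ p ∂(ν.prod μ), m ≤ a p.1 p.2 ∧ a p.1 p.2 ≤ M)
    {f : α → ℝ} (hf : Integrable f μ) {g : β → ℝ} (hg : AEStronglyMeasurable g ν) {C : ℝ}
    (hgC : ∀ᵐ s ∂ν, |g s| ≤ C) :
    Integrable (fun s => (∫ t, a s t * f t ∂μ) * g s) ν ∧
    Integrable (fun t => f t * ∫ s, a s t * g s ∂ν) μ ∧
    ∫ s, (∫ t, a s t * f t ∂μ) * g s ∂ν = ∫ t, f t * ∫ s, a s t * g s ∂ν ∂μ := by
  have h := integrable_kernel_mul ha hm hA2 hf hg hgC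
  have e1 : (fun s => (∫ t, a s t * f t ∂μ) * g s) =
      fun s => ∫ t, a s t * f t * g s ∂μ := by
    funext s; rw [integral_mul_const]
  have e2 : (fun t => f t * ∫ s, a s t * g s ∂ν) =
      fun t => ∫ s, a s t * f t * g s ∂ν := by
    funext t; rw [← integral_const_mul]; congr 1; funext s; ring
  rw [e1, e2]
  exact ⟨h.integral_prod_left, h.integral_prod_right,
    integral_integral_swap (f := fun s t => a s t * f t * g s) h⟩

theorem kernel_apply_bounds (ha : Measurable (Function.uncurry a)) (hm : 0 < m)
    (hA2 : ∀ᵐ p ∂(ν.prod μ), m ≤ a p.1 p.2 ∧ a p.1 p.2 ≤ M)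
    {x : α → ℝ} (hx : Integrable x μ) (hx0 : 0 ≤ᵐ[μ] x) (hx1 : ∫ t, x t ∂μ = 1) :
    ∀ᵐ s ∂ν, m ≤ ∫ t, a s t * x t ∂μ ∧ ∫ t, a s t * x t ∂μ ≤ M := by
  have h := integrable_kernel_mul ha hm hA2 hx (g := fun _ => (1 : ℝ)) (C := 1)
    aestronglyMeasurable_const (by simp)
  simp only [mul_one] at h
  filter_upwards [h.prod_right_ae, Measure.ae_ae_of_ae_prod hA2] with s hs hb
  constructor
  · calc m = ∫ t, m * x t ∂μ := by rw [integral_const_mul, hx1, mul_one]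
      _ ≤ _ := by
        refine integral_mono_ae (hx.const_mul m) hs ?_
        filter_upwards [hb, hx0] with t h1 h2
        exact mul_le_mul_of_nonneg_right h1.1 h2
  · calc _ ≤ ∫ t, M * x t ∂μ := by
          refine integral_mono_ae hs (hx.const_mul M) ?_
          filter_upwards [hb, hx0] with t h1 h2
          exact mul_le_mul_of_nonneg_right h1.2 h2
      _ = M := by rw [integral_const_mul, hx1, mul_one]

/-- The averages `A* q` of a function with values in `[c, C]`, `c > 0`, stay in `[c, C]`, and
Jensen's inequality holds for the logarithm. -/
theorem kernel_adjoint_bounds (ha : Measurable (Function.uncurry a)) (hm : 0 < m)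
    (hA2 : ∀ᵐ p ∂(ν.prod μ), m ≤ a p.1 p.2 ∧ a p.1 p.2 ≤ M)
    (hA1 : ∀ᵐ t ∂μ, ∫ s, a s t ∂ν = 1)
    {q : β → ℝ} (hq : AEStronglyMeasurable q ν) {c C : ℝ} (hc : 0 < c)
    (hqb : ∀ᵐ s ∂ν, c ≤ q s ∧ q s ≤ C) {γ : ℝ} (hγ : ∀ᵐ s ∂ν, |Real.log (q s)| ≤ γ) :
    ∀ᵐ t ∂μ, c ≤ ∫ s, a s t * q s ∂ν ∧ ∫ s, a s t * q s ∂ν ≤ C ∧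
      ∫ s, a s t * Real.log (q s) ∂ν ≤ Real.log (∫ s, a s t * q s ∂ν) := by
  have hlog : AEStronglyMeasurable (fun s => Real.log (q s)) ν :=
    (Real.measurable_log.comp_aemeasurable hq.aemeasurable).aestronglyMeasurable
  have key : ∀ {g : β → ℝ} {D : ℝ}, AEStronglyMeasurable g ν → (∀ᵐ s ∂ν, |g s| ≤ D) →
      ∀ᵐ t ∂μ, Integrable (fun s => a s t * g s) ν := by
    intro g D hg hD
    have h := integrable_kernel_mul ha hm hA2 (integrable_const (1 : ℝ)) hg hD
    simp only [mul_one] at h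
    exact h.prod_left_ae
  have i1 := key (g := fun _ => (1 : ℝ)) (D := 1) aestronglyMeasurable_const (by simp)
  have i2 := key (g := q) (D := C) hq (by
    filter_upwards [hqb] with s hs
    rw [abs_of_nonneg (hc.le.trans hs.1)]; exact hs.2)
  have i3 := key hlog hγ
  have hpos : ∀ᵐ t ∂μ, ∀ᵐ s ∂ν, m ≤ a s t := by
    have h := Measure.ae_ae_of_ae_prod (Measure.measurePreserving_swap.quasiMeasurePreserving.ae hA2 :
      ∀ᵐ p ∂(μ.prod ν), m ≤ a p.swap.1 p.swap.2 ∧ a p.swap.1 p.swap.2 ≤ M)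
    filter_upwards [h] with t ht
    filter_upwards [ht] with s hs using hs.1
  filter_upwards [i1, i2, i3, hpos, hA1] with t i1 i2 i3 hpos h1
  simp only [mul_one] at i1
  have hcw : c ≤ ∫ s, a s t * q s ∂ν := by
    calc c = ∫ s, a s t * c ∂ν := by rw [integral_mul_const, h1, one_mul]
      _ ≤ _ := by
        refine integral_mono_ae (i1.mul_const c) i2 ?_
        filter_upwards [hpos, hqb] with s h2 h3
        exact mul_le_mul_of_nonneg_left h3.1 (hm.le.trans h2)
  refine ⟨hcw, ?_, ?_⟩
  · calc _ ≤ ∫ s, a s t * C ∂ν := by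
          refine integral_mono_ae i2 (i1.mul_const C) ?_
          filter_upwards [hpos, hqb] with s h2 h3
          exact mul_le_mul_of_nonneg_left h3.2 (hm.le.trans h2)
      _ = C := by rw [integral_mul_const, h1, one_mul]
  · set w := ∫ s, a s t * q s ∂ν with hw
    have hw0 : 0 < w := hc.trans_le hcw
    -- The tangent line of `log` at `w` dominates `log`; averaging it gives Jensen's inequality.
    calc _ ≤ ∫ s, (a s t * (Real.log w - 1) + a s t * q s * w⁻¹) ∂ν := by
          refine integral_mono_ae i3 ((i1.mul_const _).add (i2.mul_const _)) ?_
          filter_upwards [hpos, hqb] with s h2 h3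
          have hq0 : 0 < q s := hc.trans_le h3.1
          have h4 := Real.log_le_sub_one_of_pos (div_pos hq0 hw0)
          rw [Real.log_div hq0.ne' hw0.ne', div_eq_mul_inv] at h4
          have h5 := mul_le_mul_of_nonneg_left
            (show Real.log (q s) ≤ Real.log w - 1 + q s * w⁻¹ by linarith) (hm.le.trans h2)
          linarith
      _ = Real.log w := by
          rw [integral_add (i1.mul_const _) (i2.mul_const _), integral_mul_const,
            integral_mul_const, h1, ← hw, mul_inv_cancel₀ hw0.ne']
          ring

/-! ### One EM step -/

omit [IsFiniteMeasure μ] in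
/-- Changing the second argument of the Kullback-Leibler distance by a factor `w`, with `log w`
bounded, that preserves the total mass lowers it by `∫ v log w`. -/
theorem KL_mul {v x w : α → ℝ} (hv : Integrable v μ) (hx : Integrable x μ)
    (hxw : Integrable (fun t => x t * w t) μ) (hw : AEStronglyMeasurable w μ)
    {γ : ℝ} (hw0 : ∀ᵐ t ∂μ, 0 < w t) (hwγ : ∀ᵐ t ∂μ, |Real.log (w t)| ≤ γ)
    (h0 : ∀ᵐ t ∂μ, x t = 0 → v t = 0) (hmass : ∫ t, x t * w t ∂μ = ∫ t, x t ∂μ)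
    (hfin : Integrable (fun t => v t * Real.log (v t / x t) - v t + x t) μ) :
    Integrable (fun t => v t * Real.log (w t)) μ ∧
    Integrable (fun t => v t * Real.log (v t / (x t * w t)) - v t + x t * w t) μ ∧
    KL μ v (fun t => x t * w t) = KL μ v x - ∫ t, v t * Real.log (w t) ∂μ := by
  have hI : Integrable (fun t => v t * Real.log (w t)) μ :=
    hv.mul_bdd (c := γ)
      (Real.measurable_log.comp_aemeasurable hw.aemeasurable).aestronglyMeasurable hwγ
  have heq : (fun t => v t * Real.log (v t / x t) - v t + x t - v t * Real.log (w t) +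
      (x t * w t - x t)) =ᵐ[μ]
      fun t => v t * Real.log (v t / (x t * w t)) - v t + x t * w t := by
    filter_upwards [hw0, h0] with t h1 h2
    by_cases hvt : v t = 0
    · simp [hvt]
    · have hxt : x t ≠ 0 := fun h => hvt (h2 h)
      rw [← div_div, Real.log_div (div_ne_zero hvt hxt) h1.ne']
      ring
  have hJ := (hfin.sub hI).add (hxw.sub hx)
  refine ⟨hI, hJ.congr heq, ?_⟩
  unfold KL
  rw [← integral_congr_ae heq, integral_add (f := fun t => v t * Real.log (v t / x t) - v t + x t -
    v t * Real.log (w t)) (g := fun t => x t * w t - x t) (hfin.sub hI) (hxw.sub hx),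
    integral_sub (f := fun t => v t * Real.log (v t / x t) - v t + x t) hfin hI,
    integral_sub hxw hx, hmass]
  ring

/-- One EM step with noisy data `yd`: the properties of the iterate that are needed to continue
are preserved, and the decrease of the distance to `v` is at least `d(yd, A x) - γ ‖y - yd‖₁`. -/
theorem em_step_estimate (ha : Measurable (Function.uncurry a)) (hm : 0 < m)
    (hA2 : ∀ᵐ p ∂(ν.prod μ), m ≤ a p.1 p.2 ∧ a p.1 p.2 ≤ M)
    (hA1 : ∀ᵐ t ∂μ, ∫ s, a s t ∂ν = 1)
    {v : α → ℝ} (hv : Integrable v μ) (hv0 : 0 ≤ᵐ[μ] v)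
    {y : β → ℝ} (hy : Integrable y ν) (hsol : (fun s => ∫ t, a s t * v t ∂μ) =ᵐ[ν] y)
    {yd : β → ℝ} (hyd : Integrable yd ν) (hyd1 : ∫ s, yd s ∂ν = 1)
    {m1 M1 : ℝ} (hm1 : 0 < m1) (hA6 : ∀ᵐ s ∂ν, m1 ≤ yd s ∧ yd s ≤ M1)
    {γ : ℝ} (hγ : γ = max |Real.log (m1 / M)| |Real.log (M1 / m)|)
    {x : α → ℝ} (hx : Integrable x μ) (hx0 : 0 ≤ᵐ[μ] x) (hx1 : ∫ t, x t ∂μ = 1)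
    (hfin : Integrable (fun t => v t * Real.log (v t / x t) - v t + x t) μ)
    (h0 : ∀ᵐ t ∂μ, x t = 0 → v t = 0)
    {x' : α → ℝ}
    (hx' : x' = fun t => x t * ∫ s, a s t * (yd s / ∫ t', a s t' * x t' ∂μ) ∂ν) :
    (Integrable x' μ ∧ 0 ≤ᵐ[μ] x' ∧ ∫ t, x' t ∂μ = 1 ∧
      Integrable (fun t => v t * Real.log (v t / x' t) - v t + x' t) μ ∧
      ∀ᵐ t ∂μ, x' t = 0 → v t = 0) ∧
    KL μ v x' ≤ KL μ v x -
      (KL ν yd (fun s => ∫ t, a s t * x t ∂μ) - γ * ∫ s, |y s - yd s| ∂ν) := by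
  have hAx := kernel_apply_bounds ha hm hA2 hx hx0 hx1
  obtain ⟨hAxI, -, hAx1⟩ := integral_kernel_mul ha hm hA2 hx (g := fun _ => (1 : ℝ)) (C := 1)
    aestronglyMeasurable_const (by simp)
  simp only [mul_one] at hAxI hAx1
  have hAx1 : ∫ s, (∫ t, a s t * x t ∂μ) ∂ν = 1 := by
    rw [hAx1, ← hx1]
    refine integral_congr_ae ?_
    filter_upwards [hA1] with t ht
    rw [ht, mul_one]
  set Ax : β → ℝ := fun s => ∫ t, a s t * x t ∂μ with hAxdef
  set q : β → ℝ := fun s => yd s / Ax s with hqdef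
  have hνne : ν ≠ 0 := by
    rintro rfl
    simp at hyd1
  have : (ae ν).NeBot := ae_neBot.2 hνne
  obtain ⟨s0, hs0, hs0'⟩ := (hAx.and hA6).exists
  have hM : 0 < M := hm.trans_le (hs0.1.trans hs0.2)
  have hM1 : 0 < M1 := hm1.trans_le (hs0'.1.trans hs0'.2)
  have hc : 0 < m1 / M := div_pos hm1 hM
  have hlogγ : ∀ r : ℝ, m1 / M ≤ r → r ≤ M1 / m → |Real.log r| ≤ γ := by
    intro r h1 h2
    have hr := hc.trans_le h1
    rw [hγ]
    exact abs_le_max_abs_abs (Real.log_le_log hc h1) (Real.log_le_log hr h2)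
  have hq : AEStronglyMeasurable q ν :=
    (hyd.aestronglyMeasurable.aemeasurable.div
      hAxI.aestronglyMeasurable.aemeasurable).aestronglyMeasurable
  have hlogq : AEStronglyMeasurable (fun s => Real.log (q s)) ν :=
    (Real.measurable_log.comp_aemeasurable hq.aemeasurable).aestronglyMeasurable
  have hqb : ∀ᵐ s ∂ν, m1 / M ≤ q s ∧ q s ≤ M1 / m := by
    filter_upwards [hAx, hA6] with s h1 h2
    exact ⟨div_le_div₀ (hm1.le.trans h2.1) h2.1 (hm.trans_le h1.1) h1.2,
      div_le_div₀ hM1.le h2.2 hm h1.1⟩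
  have hqγ : ∀ᵐ s ∂ν, |Real.log (q s)| ≤ γ := by
    filter_upwards [hqb] with s hs using hlogγ _ hs.1 hs.2
  have hqabs : ∀ᵐ s ∂ν, |q s| ≤ M1 / m := by
    filter_upwards [hqb] with s hs
    rw [abs_of_nonneg (hc.le.trans hs.1)]
    exact hs.2
  set w : α → ℝ := fun t => ∫ s, a s t * q s ∂ν with hwdef
  have hwb := kernel_adjoint_bounds ha hm hA2 hA1 hq hc hqb hqγ
  have hw : AEStronglyMeasurable w μ := by
    have h := (integral_kernel_mul ha hm hA2 (integrable_const (1 : ℝ)) hq hqabs).2.1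
    simp only [one_mul] at h
    exact h.aestronglyMeasurable
  have hw0 : ∀ᵐ t ∂μ, 0 < w t := by
    filter_upwards [hwb] with t ht using hc.trans_le ht.1
  have hwγ : ∀ᵐ t ∂μ, |Real.log (w t)| ≤ γ := by
    filter_upwards [hwb] with t ht using hlogγ _ ht.1 ht.2.1
  obtain ⟨-, hxwI, hxw1⟩ := integral_kernel_mul ha hm hA2 hx hq hqabs
  change Integrable (fun t => x t * w t) μ at hxwI
  change ∫ s, Ax s * q s ∂ν = ∫ t, x t * w t ∂μ at hxw1
  have hxw1 : ∫ t, x t * w t ∂μ = 1 := by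
    rw [← hxw1, ← hyd1]
    refine integral_congr_ae ?_
    filter_upwards [hAx] with s hs
    exact mul_div_cancel₀ _ (hm.trans_le hs.1).ne'
  obtain ⟨hI, hfin', hKL⟩ := KL_mul hv hx hxwI hw hw0 hwγ h0 (hxw1.trans hx1.symm) hfin
  have hx'w : x' = fun t => x t * w t := hx'
  rw [hx'w]
  refine ⟨⟨hxwI, ?_, hxw1, hfin', ?_⟩, ?_⟩
  · filter_upwards [hx0, hw0] with t h1 h2 using mul_nonneg h1 h2.le
  · filter_upwards [h0, hw0] with t h1 h2 h3
    exact h1 ((mul_eq_zero.1 h3).resolve_right h2.ne')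
  · rw [hKL]
    refine sub_le_sub_left ?_ _
    obtain ⟨hyl, hvl, hvl1⟩ := integral_kernel_mul ha hm hA2 hv hlogq hqγ
    have hylI : Integrable (fun s => y s * Real.log (q s)) ν := by
      refine hyl.congr ?_
      filter_upwards [hsol] with s hs
      rw [← hs]
    have hydlI : Integrable (fun s => yd s * Real.log (q s)) ν :=
      hyd.mul_bdd (c := γ) hlogq hqγ
    have hK : KL ν yd Ax = ∫ s, yd s * Real.log (q s) ∂ν := by
      unfold KL
      rw [integral_add (f := fun s => yd s * Real.log (yd s / Ax s) - yd s) (hydlI.sub hyd) hAxI,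
        integral_sub hydlI hyd, hyd1, hAx1]
      ring
    calc KL ν yd Ax - γ * ∫ s, |y s - yd s| ∂ν
        = ∫ s, (yd s * Real.log (q s) - γ * |y s - yd s|) ∂ν := by
          rw [integral_sub (g := fun s => γ * |y s - yd s|) hydlI
            ((hy.sub hyd).abs.const_mul γ), integral_const_mul, hK]
      _ ≤ ∫ s, y s * Real.log (q s) ∂ν := by
          refine integral_mono_ae (hydlI.sub ((hy.sub hyd).abs.const_mul γ)) hylI ?_
          filter_upwards [hqγ] with s hs
          have h1 : |(y s - yd s) * Real.log (q s)| ≤ |y s - yd s| * γ := by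
            rw [abs_mul]; exact mul_le_mul_of_nonneg_left hs (abs_nonneg _)
          have h2 := (abs_le.1 h1).1
          change yd s * Real.log (q s) - γ * |y s - yd s| ≤ y s * Real.log (q s)
          linarith
      _ = ∫ s, (∫ t, a s t * v t ∂μ) * Real.log (q s) ∂ν := by
          refine integral_congr_ae ?_
          filter_upwards [hsol] with s hs
          rw [← hs]
      _ = ∫ t, v t * ∫ s, a s t * Real.log (q s) ∂ν ∂μ := hvl1
      _ ≤ ∫ t, v t * Real.log (w t) ∂μ := by
          refine integral_mono_ae hvl hI ?_
          filter_upwards [hv0, hwb] with t h1 h2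
          exact mul_le_mul_of_nonneg_left h2.2.2 h1

end Kernel

/-! ### The loping iteration -/

/-- under (A1)-(A6), with `δ_j > 0`, `τ > 1` and
`γ = max{ |ln(m₁/M)|, |ln(M₁/m)| }`, the loping OS-EM iterates satisfy
`d(x*, x_{k+1}^δ) ≤ d(x*, x_k^δ)` for every `k`. -/
theorem loping_osem_monotone
    {d : ℕ} (Ω S : Set (Fin d → ℝ))
    (hΩo : IsOpen Ω) (hΩb : Bornology.IsBounded Ω)
    (hSo : IsOpen S) (hSb : Bornology.IsBounded S)
    (N : ℕ) (hN : 0 < N)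
    (a : ℕ → (Fin d → ℝ) → (Fin d → ℝ) → ℝ)
    (y : ℕ → (Fin d → ℝ) → ℝ)
    (ha_meas : ∀ j < N, Measurable (Function.uncurry (a j)))
    (m M : ℝ) (hm : 0 < m)
    -- (A2)
    (hA2 : ∀ j < N, ∀ᵐ s ∂(volume.restrict S), ∀ᵐ t ∂(volume.restrict Ω),
      m ≤ a j s t ∧ a j s t ≤ M)
    -- (A1)
    (hA1 : ∀ j < N, ∀ᵐ t ∂(volume.restrict Ω), (∫ s in S, a j s t) = 1)
    (M' : ℝ) (hM' : 0 < M')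
    (hy_int : ∀ j < N, Integrable (y j) (volume.restrict S))
    -- (A3)
    (hA3 : ∀ j < N, (0 ≤ᵐ[volume.restrict S] y j) ∧ (∫ s in S, y j s) = 1 ∧
      (∀ᵐ s ∂(volume.restrict S), y j s ≤ M'))
    -- (A4): a nonnegative solution x* of the system, not a.e. zero, with d(x*, x_0) < ∞
    (xstar : (Fin d → ℝ) → ℝ)
    (hxstar_int : Integrable xstar (volume.restrict Ω))
    (hxstar_nonneg : 0 ≤ᵐ[volume.restrict Ω] xstar)
    (hxstar_ne : ¬ (xstar =ᵐ[volume.restrict Ω] (0 : (Fin d → ℝ) → ℝ)))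
    (hxstar_sol : ∀ j < N, opA Ω (a j) xstar =ᵐ[volume.restrict S] y j)
    -- noisy data with noise level δ_j
    (ydel : ℕ → (Fin d → ℝ) → ℝ) (δ : ℕ → ℝ)
    (hydel_int : ∀ j < N, Integrable (ydel j) (volume.restrict S))
    (hnoise : ∀ j < N, (∫ s in S, |y j s - ydel j s|) ≤ δ j)
    -- (A5)
    (hA5 : ∀ j < N, (∫ s in S, ydel j s) = 1)
    -- (A6)
    (m1 M1 : ℝ) (hm1 : 0 < m1)
    (hA6 : ∀ j < N, ∀ᵐ s ∂(volume.restrict S), m1 ≤ ydel j s ∧ ydel j s ≤ M1)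
    (τ γ : ℝ) (hτ : 1 < τ)
    (hγ : γ = max |Real.log (m1 / M)| |Real.log (M1 / m)|)
    -- the loping OS-EM iteration, started at x_0^δ = x_0 ∈ Δ with d(x*, x_0) < ∞
    (xd : ℕ → (Fin d → ℝ) → ℝ)
    (hxd0 : InDelta Ω (xd 0))
    (hfin : Integrable (fun t => xstar t * Real.log (xstar t / xd 0 t) - xstar t + xd 0 t)
      (volume.restrict Ω))
    (hfin' : ∀ᵐ t ∂(volume.restrict Ω), xd 0 t = 0 → xstar t = 0)
    (hiterd : ∀ k,
      (τ * γ * δ (k % N) <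
          KL (volume.restrict S) (ydel (k % N)) (opA Ω (a (k % N)) (xd k)) →
        xd (k + 1) = emStep Ω S (a (k % N)) (ydel (k % N)) (xd k)) ∧
      (KL (volume.restrict S) (ydel (k % N)) (opA Ω (a (k % N)) (xd k)) ≤
          τ * γ * δ (k % N) →
        xd (k + 1) = xd k))
    (hδpos : ∀ j < N, 0 < δ j) :
    ∀ k, KL (volume.restrict Ω) xstar (xd (k + 1)) ≤
      KL (volume.restrict Ω) xstar (xd k) := by
  have fΩ : IsFiniteMeasure (volume.restrict Ω) :=
    ⟨by simpa using hΩb.measure_lt_top⟩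
  have fS : IsFiniteMeasure (volume.restrict S) :=
    ⟨by simpa using hSb.measure_lt_top⟩
  have hγ0 : 0 ≤ γ := hγ ▸ (abs_nonneg _).trans (le_max_left _ _)
  have hprod : ∀ j < N, ∀ᵐ p ∂((volume.restrict S).prod (volume.restrict Ω)),
      m ≤ a j p.1 p.2 ∧ a j p.1 p.2 ≤ M := by
    intro j hj
    have hms : MeasurableSet {p : (Fin d → ℝ) × (Fin d → ℝ) |
        m ≤ a j p.1 p.2 ∧ a j p.1 p.2 ≤ M} :=
      (measurableSet_le measurable_const (ha_meas j hj)).inter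
        (measurableSet_le (ha_meas j hj) measurable_const)
    exact (Measure.ae_prod_iff_ae_ae hms).2 (hA2 j hj)
  have step : ∀ k, (Integrable (xd k) (volume.restrict Ω) ∧ 0 ≤ᵐ[volume.restrict Ω] xd k ∧
      ∫ t in Ω, xd k t = 1 ∧
      Integrable (fun t => xstar t * Real.log (xstar t / xd k t) - xstar t + xd k t)
        (volume.restrict Ω) ∧
      ∀ᵐ t ∂(volume.restrict Ω), xd k t = 0 → xstar t = 0) →
      (Integrable (xd (k + 1)) (volume.restrict Ω) ∧ 0 ≤ᵐ[volume.restrict Ω] xd (k + 1) ∧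
      ∫ t in Ω, xd (k + 1) t = 1 ∧
      Integrable (fun t => xstar t * Real.log (xstar t / xd (k + 1) t) - xstar t + xd (k + 1) t)
        (volume.restrict Ω) ∧
      ∀ᵐ t ∂(volume.restrict Ω), xd (k + 1) t = 0 → xstar t = 0) ∧
      KL (volume.restrict Ω) xstar (xd (k + 1)) ≤ KL (volume.restrict Ω) xstar (xd k) := by
    intro k hinv
    have hj : k % N < N := Nat.mod_lt _ hN
    rcases lt_or_ge (τ * γ * δ (k % N))
      (KL (volume.restrict S) (ydel (k % N)) (opA Ω (a (k % N)) (xd k))) with hlt | hge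
    · obtain ⟨h1, h2, h3, h4, h5⟩ := hinv
      obtain ⟨hnew, hKL⟩ := em_step_estimate (ha_meas _ hj) hm (hprod _ hj) (hA1 _ hj) hxstar_int
        hxstar_nonneg (hy_int _ hj) (hxstar_sol _ hj) (hydel_int _ hj) (hA5 _ hj) hm1 (hA6 _ hj)
        hγ h1 h2 h3 h4 h5 ((hiterd k).1 hlt)
      refine ⟨hnew, hKL.trans (sub_le_self _ (sub_nonneg.2 ?_))⟩
      refine le_trans ?_ hlt.le
      calc γ * ∫ s in S, |y (k % N) s - ydel (k % N) s|
          ≤ γ * δ (k % N) := mul_le_mul_of_nonneg_left (hnoise _ hj) hγ0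
        _ ≤ τ * (γ * δ (k % N)) :=
          le_mul_of_one_le_left (mul_nonneg hγ0 (hδpos _ hj).le) hτ.le
        _ = τ * γ * δ (k % N) := (mul_assoc _ _ _).symm
    · rw [(hiterd k).2 hge]
      exact ⟨hinv, le_rfl⟩
  intro k
  refine (step k ?_).2
  induction k with
  | zero => exact ⟨hxd0.1, hxd0.2.1, hxd0.2.2, hfin, hfin'⟩
  | succ k ih => exact (step k ih).1
end
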